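/- arXiv:2112.09430 — 2 statements merged into one kernel-verified Lean document; each statement's English description precedes it below -/
import Mathlib

section
/- Let p ≥ 3 and q = 1, and set n = p + q. The action of O(p,q) on the flag manifold F_{1,n-2} = {(V₁, V₂) : V₁ ⊆ V₂ ⊆ ℝⁿ, dim V₁ = 1, dim V₂ = n−2} has exactly 6 orbits. (By the correspondence established in the paper, this is the number of left-invariant Lorentzian metrics of signature (p,1) on H₃ × ℝ^{n−3} up to scaling and automorphisms.) -/
open Module

noncomputable section

/-- The radical of a subspace `W` with respect to a bilinear form `B`:
the set of vectors of `W` orthogonal to every vector of `W`. -/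
def rad {V : Type*} [AddCommGroup V] [Module ℝ V] (B : LinearMap.BilinForm ℝ V)
    (W : Submodule ℝ V) : Submodule ℝ V :=
  W ⊓ LinearMap.BilinForm.orthogonal B W

/-- The maximal dimension of a subspace of `W` on which `B` is positive definite. -/
def posIdx {V : Type*} [AddCommGroup V] [Module ℝ V] (B : LinearMap.BilinForm ℝ V)
    (W : Submodule ℝ V) : ℕ :=
  sSup {k | ∃ P : Submodule ℝ V, P ≤ W ∧ finrank ℝ P = k ∧ ∀ x ∈ P, x ≠ 0 → 0 < B x x}

/-- The maximal dimension of a subspace of `W` on which `B` is negative definite. -/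
def negIdx {V : Type*} [AddCommGroup V] [Module ℝ V] (B : LinearMap.BilinForm ℝ V)
    (W : Submodule ℝ V) : ℕ :=
  sSup {k | ∃ P : Submodule ℝ V, P ≤ W ∧ finrank ℝ P = k ∧ ∀ x ∈ P, x ≠ 0 → B x x < 0}

/-- The signature `(s, t, u)` of a subspace `W` with respect to a bilinear form `B`. -/
def signat {V : Type*} [AddCommGroup V] [Module ℝ V] (B : LinearMap.BilinForm ℝ V)
    (W : Submodule ℝ V) : ℕ × ℕ × ℕ :=
  (posIdx B W, negIdx B W, finrank ℝ (rad B W))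

/-- The standard inner product of signature `(p, q)` on `ℝ^(p+q)`,
given by the diagonal matrix `I_{p,q}`. -/
def stdForm (p q : ℕ) : LinearMap.BilinForm ℝ (Fin (p + q) → ℝ) :=
  Matrix.toLinearMap₂' ℝ (Matrix.diagonal fun i => if (i : ℕ) < p then (1 : ℝ) else -1)

/-- The flag manifold `F_{1, p+q-2}`: pairs `(V₁, V₂)` of subspaces of `ℝ^(p+q)` with
`V₁ ⊆ V₂`, `dim V₁ = 1` and `dim V₂ = p+q-2`. -/
def FlagPQ (p q : ℕ) : Type :=
  {VW : Submodule ℝ (Fin (p + q) → ℝ) × Submodule ℝ (Fin (p + q) → ℝ) //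
    VW.1 ≤ VW.2 ∧ finrank ℝ VW.1 = 1 ∧ finrank ℝ VW.2 = p + q - 2}

/-- Two flags lie in the same `O(p,q)`-orbit: there is a linear automorphism of `ℝ^(p+q)`
preserving the standard form of signature `(p,q)` carrying one flag to the other. -/
def orbitRel (p q : ℕ) (F G : FlagPQ p q) : Prop :=
  ∃ g : (Fin (p + q) → ℝ) ≃ₗ[ℝ] (Fin (p + q) → ℝ),
    (∀ x y, stdForm p q (g x) (g y) = stdForm p q x y) ∧
      F.1.1 = (G.1.1).map g.toLinearMap ∧ F.1.2 = (G.1.2).map g.toLinearMap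

/-!
Attach to a flag `X ≤ Y` the signs of the form on the line `X` and of its Gram determinant on the
plane `Yᗮ`. The form takes positive values on every plane, so `Yᗮ = span {u, e}` with `u` a unit
vector orthogonal to `e`, and a suitable generator `v` of `X` is orthogonal to both. By Witt's
extension theorem the two signs determine the orbit, except that `v` and `e` are linearly dependent
when both signs vanish; there Witt's theorem is applied to `u, v` only. Two orthogonal nonzero
vectors of a Lorentzian space are not both nonspacelike unless they are proportional null vectors,
which leaves six of the nine pairs of signs, and each is realised when there are three orthogonal
spacelike directions.
-/

open LinearMap (BilinForm)
open SignType (sign)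

section Sign

variable {K : Type*} [Field K] [LinearOrder K] [IsStrictOrderedRing K]

theorem sign_eq_of_eq_sq_mul {a b r s : K} (hab : a = r ^ 2 * b) (hba : b = s ^ 2 * a) :
    sign a = sign b := by
  obtain rfl | hr := eq_or_ne r 0
  · simp_all
  · rw [hab, sign_mul, sign_pos (by positivity), one_mul]

theorem sign_coe (a : SignType) : sign (a : K) = a := by
  cases a <;> simp

theorem coe_signType_eq_zero {a : SignType} : (a : K) = 0 ↔ a = 0 := by
  rw [← sign_eq_zero_iff, sign_coe]

theorem coe_signType_nonpos {a : SignType} (ha : a ≠ 1) : (a : K) ≤ 0 := by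
  rw [← sign_nonpos_iff, sign_coe]
  decide +revert

end Sign

section Orthogonal

variable {R M : Type*} [CommRing R] [AddCommGroup M] [Module R M] {B : BilinForm R M}

theorem map_orthogonal (g : B.IsometryEquiv B) (W : Submodule R M) :
    (B.orthogonal W).map g.toLinearEquiv.toLinearMap =
      B.orthogonal (W.map g.toLinearEquiv.toLinearMap) := by
  ext y
  obtain ⟨x, rfl⟩ := g.surjective y
  simp [-Submodule.mem_map_equiv]

theorem mem_orthogonal_span_pair {x y z : M} :
    z ∈ B.orthogonal (Submodule.span R {x, y}) ↔ B x z = 0 ∧ B y z = 0 := by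
  refine ⟨fun h ↦ ⟨h x (Submodule.subset_span (by simp)), h y (Submodule.subset_span (by simp))⟩,
    fun ⟨hx, hy⟩ w hw ↦ ?_⟩
  obtain ⟨a, b, rfl⟩ := Submodule.mem_span_pair.1 hw
  simp [hx, hy]

theorem apply_self_eq_sq_mul {x y : M} (hx : x ∈ Submodule.span R {y}) :
    ∃ r : R, B x x = r ^ 2 * B y y := by
  obtain ⟨r, rfl⟩ := Submodule.mem_span_singleton.1 hx
  exact ⟨r, by simp only [map_smul, LinearMap.smul_apply, smul_eq_mul]; ring⟩

theorem gram_det_eq_sq_mul {x y x' y' : M} (hx' : x' ∈ Submodule.span R {x, y})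
    (hy' : y' ∈ Submodule.span R {x, y}) :
    ∃ r : R, B x' x' * B y' y' - B x' y' * B y' x' =
      r ^ 2 * (B x x * B y y - B x y * B y x) := by
  obtain ⟨a, b, rfl⟩ := Submodule.mem_span_pair.1 hx'
  obtain ⟨c, d, rfl⟩ := Submodule.mem_span_pair.1 hy'
  refine ⟨a * d - b * c, ?_⟩
  simp only [map_add, map_smul, LinearMap.add_apply, LinearMap.smul_apply, smul_eq_mul]
  ring

end Orthogonal

section Witt

variable {K E : Type*} [Field K] [AddCommGroup E] [Module K E] {B : BilinForm K E}

theorem exists_ne_zero_forall_apply_eq_zero {ι : Type*} [Fintype ι] (f : ι → E →ₗ[K] K)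
    (hι : Fintype.card ι < finrank K E) : ∃ x ≠ 0, ∀ i, f i x = 0 := by
  have : FiniteDimensional K E := .of_finrank_pos (by lia)
  obtain ⟨x, hx, hx0⟩ := Submodule.exists_mem_ne_zero_of_ne_bot
    (LinearMap.ker_ne_bot_of_finrank_lt (f := LinearMap.pi f) (by simpa using hι))
  exact ⟨x, hx0, congrFun hx⟩

theorem exists_mem_ne_zero_apply_eq_zero {U : Submodule K E} (hU : 1 < finrank K U)
    (f : E →ₗ[K] K) : ∃ x ∈ U, x ≠ 0 ∧ f x = 0 := by
  obtain ⟨x, hx0, hx⟩ :=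
    exists_ne_zero_forall_apply_eq_zero (fun _ : Unit ↦ f.domRestrict U) (by simpa using hU)
  exact ⟨x, x.2, by simpa using hx0, hx ()⟩

theorem linearIndependent_cons_of_ortho {k : ℕ} {u : E} {x : Fin k → E} (hu : B u u ≠ 0)
    (hux : ∀ i, B u (x i) = 0) (hx : LinearIndependent K x) :
    LinearIndependent K (Fin.cons u x : Fin (k + 1) → E) := by
  refine hx.finCons fun hmem ↦ hu ?_
  have hspan : Submodule.span K (Set.range x) ≤ LinearMap.ker (B u) :=
    Submodule.span_le.2 (Set.range_subset_iff.2 hux)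
  exact hspan hmem

theorem linearIndependent_pair_of_ortho {u e : E} (hu : B u u ≠ 0) (hue : B u e = 0)
    (he : e ≠ 0) : LinearIndependent K ![u, e] :=
  linearIndependent_cons_of_ortho hu (by simpa using hue) (by simpa using he)

theorem finrank_span_pair_of_ortho {u e : E} (hu : B u u ≠ 0) (hue : B u e = 0)
    (he : e ≠ 0) : finrank K (Submodule.span K {u, e}) = 2 := by
  rw [← Matrix.range_cons_cons_empty u e ![],
    finrank_span_eq_card (linearIndependent_pair_of_ortho hu hue he), Fintype.card_fin]

variable [FiniteDimensional K E]

theorem exists_mem_orthogonal_apply_eq_one (hB : B.Nondegenerate) (hsymm : B.IsSymm)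
    {W : Submodule K E} {x : E} (hx : x ∉ W) : ∃ n ∈ B.orthogonal W, B x n = 1 := by
  rw [← BilinForm.orthogonal_orthogonal hB hsymm.isRefl W] at hx
  simp only [BilinForm.mem_orthogonal_iff, not_forall] at hx
  obtain ⟨m, hm, hmx⟩ := hx
  exact ⟨(B m x)⁻¹ • m, Submodule.smul_mem _ _ hm, by simp [hsymm.eq x m, hmx]⟩

variable [NeZero (2 : K)]

theorem exists_isometryEquiv_of_forall_apply_self (hB : B.Nondegenerate) (hsymm : B.IsSymm)
    (T : E →ₗ[K] E) (hT : ∀ w, B (T w) (T w) = B w w) :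
    ∃ g : B.IsometryEquiv B, ∀ w, g w = T w := by
  have horth : B.IsOrthogonal T := LinearMap.isOrthogonal_of_forall_apply_same T
    (IsLeftCancelMulZero.mul_left_cancel_of_ne_zero two_ne_zero)
    (BilinForm.isSymm_iff.1 hsymm) hT
  have hinj : Function.Injective T := (injective_iff_map_eq_zero T).2 fun x hx ↦
    hB.1 x fun y ↦ by rw [← horth, hx, map_zero, LinearMap.zero_apply]
  exact ⟨⟨LinearEquiv.ofInjectiveEndo T hinj, horth⟩, fun _ ↦ rfl⟩

theorem exists_isometryEquiv_reflection (hB : B.Nondegenerate) (hsymm : B.IsSymm)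
    {z : E} (hz : B z z ≠ 0) :
    ∃ g : B.IsometryEquiv B, ∀ w, g w = w - (2 * B w z / B z z) • z := by
  obtain ⟨g, hg⟩ := exists_isometryEquiv_of_forall_apply_self hB hsymm
    (LinearMap.id - (2 / B z z) • (B.flip z).smulRight z) fun w ↦ by
      simp only [LinearMap.sub_apply, LinearMap.id_coe, id_eq, LinearMap.smul_apply,
        LinearMap.coe_smulRight, BilinForm.flip_apply, map_sub, map_smul, smul_eq_mul,
        hsymm.eq z w]
      field_simp
      ring
  exact ⟨g, fun w ↦ by simp [hg, smul_smul, mul_div_right_comm]⟩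

theorem exists_isometryEquiv_transvection (hB : B.Nondegenerate) (hsymm : B.IsSymm)
    {z n : E} (hz : B z z = 0) (hzn : B z n = 0) :
    ∃ g : B.IsometryEquiv B, ∀ w,
      g w = w + B w n • z - B w z • n - (2⁻¹ * B n n * B w z) • z := by
  obtain ⟨g, hg⟩ := exists_isometryEquiv_of_forall_apply_self hB hsymm
    (LinearMap.id + (B.flip n).smulRight z - (B.flip z).smulRight n -
      (2⁻¹ * B n n) • (B.flip z).smulRight z) fun w ↦ by
      simp only [LinearMap.sub_apply, LinearMap.add_apply, LinearMap.id_coe, id_eq,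
        LinearMap.coe_smulRight, BilinForm.flip_apply, LinearMap.smul_apply, map_sub, map_add,
        map_smul, smul_eq_mul, hsymm.eq z w, hsymm.eq n w, hsymm.eq n z, hz, hzn]
      field_simp
      ring
  exact ⟨g, fun w ↦ by simp [hg, smul_smul]⟩

theorem exists_isometryEquiv_hyperbolic (hB : B.Nondegenerate) (hsymm : B.IsSymm)
    {z n : E} (hz : B z z = 0) (hn : B n n = 0) (hzn : B z n = 1) {c : K} (hc : c ≠ 0) :
    ∃ g : B.IsometryEquiv B, ∀ w,
      g w = w + ((c - 1) * B w n) • z + ((c⁻¹ - 1) * B w z) • n := by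
  obtain ⟨g, hg⟩ := exists_isometryEquiv_of_forall_apply_self hB hsymm
    (LinearMap.id + (c - 1) • (B.flip n).smulRight z + (c⁻¹ - 1) • (B.flip z).smulRight n)
    fun w ↦ by
      simp only [LinearMap.add_apply, LinearMap.id_coe, id_eq, LinearMap.smul_apply,
        LinearMap.coe_smulRight, BilinForm.flip_apply, map_add, map_smul, smul_eq_mul,
        hsymm.eq z w, hsymm.eq n w, hsymm.eq n z, hz, hn, hzn]
      field_simp
      ring
  exact ⟨g, fun w ↦ by simp [hg, smul_smul]⟩

theorem exists_isometryEquiv_map_add_of_notMem (hB : B.Nondegenerate) (hsymm : B.IsSymm)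
    {H : Submodule K E} {x z : E} (hzH : ∀ h ∈ H, B h z = 0) (hzz : B z z = 0)
    (hxz : B x z = 0) (hx : x ∉ H ⊔ Submodule.span K {z}) :
    ∃ g : B.IsometryEquiv B, (∀ h ∈ H, g h = h) ∧ g x = x + z := by
  obtain ⟨n, hn, hxn⟩ := exists_mem_orthogonal_apply_eq_one hB hsymm hx
  have hzn : B z n = 0 := hn z (Submodule.mem_sup_right (Submodule.mem_span_singleton_self z))
  obtain ⟨g, hg⟩ := exists_isometryEquiv_transvection hB hsymm hzz hzn
  refine ⟨g, fun h hh ↦ ?_, by simp [hg, hxn, hxz]⟩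
  have hhn : B h n = 0 := hn h (Submodule.mem_sup_left hh)
  simp [hg, hhn, hzH h hh]

theorem exists_isometryEquiv_map_eq_smul (hB : B.Nondegenerate) (hsymm : B.IsSymm)
    {H : Submodule K E} {z : E} (hzH : ∀ h ∈ H, B h z = 0) (hzz : B z z = 0) (hz : z ∉ H)
    {c : K} (hc : c ≠ 0) :
    ∃ g : B.IsometryEquiv B, (∀ h ∈ H, g h = h) ∧ g z = c • z := by
  obtain ⟨m, hm, hzm⟩ := exists_mem_orthogonal_apply_eq_one hB hsymm hz
  set n := m - (2⁻¹ * B m m) • z with hn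
  have hzn : B z n = 1 := by simp [hn, hzm, hzz]
  have hnn : B n n = 0 := by
    simp only [hn, map_sub, map_smul, LinearMap.sub_apply, LinearMap.smul_apply, smul_eq_mul,
      hsymm.eq m z, hzm, hzz]
    field_simp
    ring
  obtain ⟨g, hg⟩ := exists_isometryEquiv_hyperbolic hB hsymm hzz hnn hzn hc
  refine ⟨g, fun h hh ↦ ?_, ?_⟩
  · have hhm : B h m = 0 := hm h hh
    have hhn : B h n = 0 := by simp [hn, hhm, hzH h hh]
    simp [hg, hhn, hzH h hh]
  · rw [hg, hzn, hzz]
    module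

theorem exists_isometryEquiv_fixing_map_eq (hB : B.Nondegenerate) (hsymm : B.IsSymm)
    {H : Submodule K E} {x y : E} (hx : x ∉ H) (hy : y ∉ H) (hxy : B x x = B y y)
    (hH : ∀ h ∈ H, B h x = B h y) :
    ∃ g : B.IsometryEquiv B, (∀ h ∈ H, g h = h) ∧ g x = y := by
  obtain ⟨z, rfl⟩ : ∃ z, y = x + z := ⟨y - x, by abel⟩
  have hzH : ∀ h ∈ H, B h z = 0 := fun h hh ↦ by simpa using hH h hh
  have hxz : 2 * B x z = - B z z := by
    simp only [map_add, LinearMap.add_apply, hsymm.eq z x] at hxy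
    linear_combination -hxy
  -- If `z` is anisotropic, reflect in it. Otherwise use a transvection along `z`, or, if no
  -- vector orthogonal to `H` and `z` pairs nontrivially with `x`, rescale a hyperbolic plane.
  by_cases hzz : B z z = 0
  · replace hxz : B x z = 0 := by simpa [hzz, two_ne_zero] using hxz
    by_cases hxHz : x ∈ H ⊔ Submodule.span K {z}
    · obtain ⟨h, hh, s, hs, rfl⟩ := Submodule.mem_sup.1 hxHz
      obtain ⟨r, rfl⟩ := Submodule.mem_span_singleton.1 hs
      have hz : z ∉ H := fun hz ↦ hx (H.add_mem hh (H.smul_mem r hz))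
      have hr : r ≠ 0 := by rintro rfl; simp [hh] at hx
      have hr' : r + 1 ≠ 0 := fun h0 ↦ hy <| by
        rwa [add_assoc, show r • z + z = (r + 1) • z by module, h0, zero_smul, add_zero]
      obtain ⟨g, hgH, hgz⟩ := exists_isometryEquiv_map_eq_smul hB hsymm hzH hzz hz
        (div_ne_zero hr' hr)
      refine ⟨g, hgH, ?_⟩
      rw [map_add, map_smul, hgH h hh, hgz, smul_smul, mul_div_cancel₀ _ hr]
      module
    · exact exists_isometryEquiv_map_add_of_notMem hB hsymm hzH hzz hxz hxHz
  · obtain ⟨g, hg⟩ := exists_isometryEquiv_reflection hB hsymm hzz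
    refine ⟨g, fun h hh ↦ by simp [hg, hzH h hh], ?_⟩
    rw [hg, hxz, neg_div, div_self hzz]
    module

/-- **Witt's extension theorem** for finite linearly independent families. -/
theorem exists_isometryEquiv_of_gram_eq (hB : B.Nondegenerate) (hsymm : B.IsSymm) {k : ℕ}
    {x y : Fin k → E} (hx : LinearIndependent K x) (hy : LinearIndependent K y)
    (hxy : ∀ i j, B (x i) (x j) = B (y i) (y j)) :
    ∃ g : B.IsometryEquiv B, ∀ i, g (x i) = y i := by
  induction k with
  | zero => exact ⟨.refl B, fun i ↦ i.elim0⟩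
  | succ k ih =>
    obtain ⟨hxi, -⟩ := linearIndependent_finSucc'.1 hx
    obtain ⟨hyi, hyl⟩ := linearIndependent_finSucc'.1 hy
    obtain ⟨g, hg⟩ : ∃ g : B.IsometryEquiv B, ∀ i : Fin k, g (x i.castSucc) = y i.castSucc :=
      ih hxi hyi fun i j ↦ hxy i.castSucc j.castSucc
    have hgx : LinearIndependent K (g ∘ x) :=
      hx.map' g.toLinearEquiv.toLinearMap g.toLinearEquiv.ker
    have hgi : Fin.init (g ∘ x) = Fin.init y := funext hg
    have hgxl : g (x (Fin.last k)) ∉ Submodule.span K (Set.range (Fin.init y)) :=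
      hgi ▸ (linearIndependent_finSucc'.1 hgx).2
    have hspan : ∀ h ∈ Submodule.span K (Set.range (Fin.init y)),
        B h (g (x (Fin.last k))) = B h (y (Fin.last k)) := by
      refine LinearMap.eqOn_span (f := B.flip _) (g := B.flip _) ?_
      rintro _ ⟨i, rfl⟩
      calc B (y i.castSucc) (g (x (Fin.last k)))
          = B (g (x i.castSucc)) (g (x (Fin.last k))) := by rw [hg]
        _ = B (y i.castSucc) (y (Fin.last k)) := by rw [g.map_app, hxy]
    obtain ⟨f, hfH, hfl⟩ := exists_isometryEquiv_fixing_map_eq hB hsymm hgxl hyl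
      (by rw [g.map_app, hxy]) hspan
    refine ⟨g.trans f, Fin.lastCases hfl fun i ↦ ?_⟩
    exact (congrArg f (hg i)).trans (hfH _ (Submodule.subset_span ⟨i, rfl⟩))

end Witt

section Lorentzian

variable {E : Type*} [AddCommGroup E] [Module ℝ E] {B : BilinForm ℝ E}

theorem exists_smul_apply_self_eq_sign (B : BilinForm ℝ E) (x : E) :
    ∃ r : ℝ, r ≠ 0 ∧ B (r • x) (r • x) = sign (B x x) := by
  obtain hB | hB := eq_or_ne (B x x) 0
  · exact ⟨1, one_ne_zero, by simp [hB]⟩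
  · have hsqrt : √|B x x| ≠ 0 := by positivity
    have hsq : √|B x x| ^ 2 = |B x x| := Real.sq_sqrt (abs_nonneg _)
    refine ⟨(√|B x x|)⁻¹, inv_ne_zero hsqrt, ?_⟩
    simp only [map_smul, LinearMap.smul_apply, smul_eq_mul]
    field_simp
    rw [hsq, mul_comm, sign_mul_abs]

/-- A symmetric form of signature `(n - 1, 1)`, encoded as the existence of a timelike vector on
whose orthogonal complement the form is positive definite. -/
structure IsLorentzian (B : BilinForm ℝ E) : Prop where
  isSymm : B.IsSymm
  exists_timelike : ∃ t, B t t < 0 ∧ ∀ x, B x t = 0 → x ≠ 0 → 0 < B x x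

namespace IsLorentzian

theorem nondegenerate (hB : IsLorentzian B) : B.Nondegenerate := by
  obtain ⟨t, -, hpos⟩ := hB.exists_timelike
  refine (LinearMap.IsRefl.nondegenerate_iff_separatingLeft hB.isSymm.isRefl).2 fun x hx ↦ ?_
  by_contra hx0
  exact (hpos x (hx t) hx0).ne' (hx x)

theorem apply_self_eq_zero_and_eq_smul_of_ortho (hB : IsLorentzian B) {x y : E}
    (hx0 : x ≠ 0) (hy0 : y ≠ 0) (hx : B x x ≤ 0) (hy : B y y ≤ 0) (hxy : B x y = 0) :
    B x x = 0 ∧ B y y = 0 ∧ ∃ c : ℝ, c ≠ 0 ∧ y = c • x := by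
  obtain ⟨t, -, hpos⟩ := hB.exists_timelike
  have hxt : B x t ≠ 0 := fun h ↦ (hpos x h hx0).not_ge hx
  have hyt : B y t ≠ 0 := fun h ↦ (hpos y h hy0).not_ge hy
  have hdep : B y t • x - B x t • y = 0 := by
    by_contra hz
    have hself := hpos (B y t • x - B x t • y) (by simp [mul_comm]) hz
    simp only [map_sub, map_smul, LinearMap.sub_apply, LinearMap.smul_apply, smul_eq_mul,
      hB.isSymm.eq y x, hxy] at hself
    nlinarith [mul_nonneg (sq_nonneg (B y t)) (neg_nonneg.2 hx),
      mul_nonneg (sq_nonneg (B x t)) (neg_nonneg.2 hy)]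
  obtain ⟨c, hc, rfl⟩ : ∃ c : ℝ, c ≠ 0 ∧ y = c • x :=
    ⟨(B x t)⁻¹ * B y t, by positivity, by
      rw [mul_smul, sub_eq_zero.1 hdep, inv_smul_smul₀ hxt]⟩
  have hxx : B x x = 0 := by simpa [hc] using hxy
  exact ⟨hxx, by simp [hxx], c, hc, rfl⟩

end IsLorentzian

theorem exists_span_singleton_apply_self_eq (B : BilinForm ℝ E) {X : Submodule ℝ E}
    (hX : finrank ℝ X = 1) :
    ∃ (v : E) (c : SignType), v ≠ 0 ∧ B v v = c ∧ X = Submodule.span ℝ {v} := by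
  have : FiniteDimensional ℝ X := .of_finrank_pos (by lia)
  obtain ⟨x, hxX, hx0⟩ := X.exists_mem_ne_zero_of_ne_bot (by rintro rfl; simp at hX)
  obtain ⟨r, hr, hrx⟩ := exists_smul_apply_self_eq_sign B x
  have hrx0 : r • x ≠ 0 := smul_ne_zero hr hx0
  refine ⟨r • x, _, hrx0, hrx, (Submodule.eq_of_le_of_finrank_eq ?_ ?_).symm⟩
  · exact (Submodule.span_singleton_le_iff_mem _ _).2 (X.smul_mem r hxX)
  · rw [finrank_span_singleton hrx0, hX]

theorem exists_ne_zero_apply_self_eq_coe {t y : E} (htt : B t t = -1) (hyy : B y y = 1)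
    (hyt : B y t = 0) (hty : B t y = 0) (c : SignType) :
    ∃ n ≠ 0, B n n = c ∧ ∀ z, B z t = 0 → B z y = 0 → B z n = 0 := by
  obtain rfl | rfl | rfl := c.trichotomy
  · exact ⟨t, by rintro rfl; simp at htt, by simp [htt], fun z hzt _ ↦ hzt⟩
  · refine ⟨t + y, fun h ↦ ?_, by simp [htt, hyy, hyt, hty], fun z hzt hzy ↦ by simp [hzt, hzy]⟩
    simpa [h, hty, htt] using map_add (B t) t y
  · exact ⟨y, by rintro rfl; simp at hyy, by simp [hyy], fun z _ hzy ↦ hzy⟩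

theorem IsLorentzian.exists_ortho_span_pair (hB : IsLorentzian B) {U : Submodule ℝ E}
    (hU : finrank ℝ U = 2) :
    ∃ (u e : E) (c : SignType), B u u = 1 ∧ B u e = 0 ∧ e ≠ 0 ∧ B e e = c ∧
      U = Submodule.span ℝ {u, e} := by
  obtain ⟨t, -, hpos⟩ := hB.exists_timelike
  obtain ⟨u, huU, hu0, hut⟩ := exists_mem_ne_zero_apply_eq_zero (U := U) (by lia) (B.flip t)
  obtain ⟨e, heU, he0, heu⟩ := exists_mem_ne_zero_apply_eq_zero (U := U) (by lia) (B u)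
  obtain ⟨r, -, hru⟩ := exists_smul_apply_self_eq_sign B u
  obtain ⟨s, hs, hse⟩ := exists_smul_apply_self_eq_sign B e
  rw [sign_pos (hpos u hut hu0), SignType.coe_one] at hru
  have hortho : B (r • u) (s • e) = 0 := by simp [heu]
  have hse0 : s • e ≠ 0 := smul_ne_zero hs he0
  refine ⟨r • u, s • e, _, hru, hortho, hse0, hse, ?_⟩
  have : FiniteDimensional ℝ U := .of_finrank_pos (by lia)
  refine (Submodule.eq_of_le_of_finrank_eq (Submodule.span_le.2 ?_) ?_).symm
  · rintro _ (rfl | rfl)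
    exacts [U.smul_mem r huU, U.smul_mem s heU]
  · rw [finrank_span_pair_of_ortho (hru.trans_ne one_ne_zero) hortho hse0, hU]

theorem IsLorentzian.exists_orthonormal_frame (hB : IsLorentzian B) {k : ℕ}
    (hk : k < finrank ℝ E) :
    ∃ (t : E) (b : Fin k → E), B t t = -1 ∧ (∀ i, B (b i) t = 0) ∧
      ∀ i j, B (b i) (b j) = if i = j then 1 else 0 := by
  obtain ⟨t, ht, hpos⟩ := hB.exists_timelike
  obtain ⟨r, -, hrt⟩ := exists_smul_apply_self_eq_sign B t
  rw [sign_neg ht, SignType.coe_neg_one] at hrt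
  suffices ∃ b : Fin k → E, (∀ i, B (b i) t = 0) ∧
      ∀ i j, B (b i) (b j) = if i = j then 1 else 0 by
    obtain ⟨b, hbt, hb⟩ := this
    exact ⟨r • t, b, hrt, fun i ↦ by simp [hbt], hb⟩
  induction k with
  | zero => exact ⟨Fin.elim0, fun i ↦ i.elim0, fun i ↦ i.elim0⟩
  | succ k ih =>
    obtain ⟨b, hbt, hb⟩ := ih (by lia)
    obtain ⟨x, hx0, hx⟩ := exists_ne_zero_forall_apply_eq_zero
      (fun i : Fin (k + 1) ↦ B (Fin.cons (α := fun _ ↦ E) t b i)) (by simpa using hk)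
    obtain ⟨htx, hbx⟩ := Fin.forall_fin_succ.1 hx
    have hxt : B x t = 0 := (hB.isSymm.eq x t).trans htx
    obtain ⟨s, -, hs⟩ := exists_smul_apply_self_eq_sign B x
    rw [sign_pos (hpos x hxt hx0), SignType.coe_one] at hs
    have hbs i : B (b i) (s • x) = 0 := by simpa using .inr (hbx i)
    have hsb i : B (s • x) (b i) = 0 := (hB.isSymm.eq (s • x) (b i)).trans (hbs i)
    refine ⟨Fin.cons (s • x) b, Fin.cases (by simp [hxt]) hbt, Fin.cases ?_ fun i ↦ ?_⟩
    · exact Fin.cases (by simpa using hs) fun j ↦ by simpa [(Fin.succ_ne_zero j).symm] using hsb j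
    · exact Fin.cases (by simpa using hbs i) fun j ↦ by simpa using hb i j

/-- Vectors adapted to the flag `span {v} ≤ (span {u, e})ᗮ`: they are pairwise orthogonal, `u` is a
unit spacelike vector, and `τ` records the norms of `v` and `e`. Since `B u u = 1`, `τ.2` is the
Gram determinant of `u, e`. The vectors `v` and `e` may coincide, when both are null. -/
structure IsAdaptedTriple (B : BilinForm ℝ E) (τ : SignType × SignType) (v u e : E) : Prop where
  line_ne_zero : v ≠ 0
  plane_ne_zero : e ≠ 0
  line_self : B v v = τ.1
  unit_self : B u u = 1
  plane_self : B e e = τ.2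
  unit_line : B u v = 0
  unit_plane : B u e = 0
  line_plane : B v e = 0

/-- The types of flags occurring in a Lorentzian space: those of pairs of nonzero orthogonal
vectors, of which one is spacelike or both are null. -/
def lorentzianFlagTypes : Finset (SignType × SignType) := {τ | τ.1 = 1 ∨ τ.2 = 1 ∨ τ = 0}

namespace IsAdaptedTriple

variable {τ τ' : SignType × SignType} {v u e v' u' e' : E}

theorem map (h : IsAdaptedTriple B τ v u e) (g : B.IsometryEquiv B) :
    IsAdaptedTriple B τ (g v) (g u) (g e) where
  line_ne_zero := by simpa using h.line_ne_zero
  plane_ne_zero := by simpa using h.plane_ne_zero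
  line_self := by rw [g.map_app, h.line_self]
  unit_self := by rw [g.map_app, h.unit_self]
  plane_self := by rw [g.map_app, h.plane_self]
  unit_line := by rw [g.map_app, h.unit_line]
  unit_plane := by rw [g.map_app, h.unit_plane]
  line_plane := by rw [g.map_app, h.line_plane]

theorem type_mem_lorentzianFlagTypes (hB : IsLorentzian B) (h : IsAdaptedTriple B τ v u e) :
    τ ∈ lorentzianFlagTypes := by
  rw [lorentzianFlagTypes, Finset.mem_filter_univ, or_iff_not_imp_left, or_iff_not_imp_left]
  intro hv he
  obtain ⟨hvv, hee, -⟩ := hB.apply_self_eq_zero_and_eq_smul_of_ortho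
    h.line_ne_zero h.plane_ne_zero (h.line_self.trans_le (coe_signType_nonpos hv))
    (h.plane_self.trans_le (coe_signType_nonpos he)) h.line_plane
  rw [h.line_self] at hvv
  rw [h.plane_self] at hee
  exact Prod.ext (coe_signType_eq_zero.1 hvv) (coe_signType_eq_zero.1 hee)

theorem gram_eq_diagonal (hsymm : B.IsSymm) (h : IsAdaptedTriple B τ v u e) (i j : Fin 3) :
    B (![u, v, e] i) (![u, v, e] j) = Matrix.diagonal ![1, (τ.1 : ℝ), (τ.2 : ℝ)] i j := by
  fin_cases i <;> fin_cases j <;>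
    simp [h.line_self, h.unit_self, h.plane_self, h.unit_line, h.unit_plane, h.line_plane,
      hsymm.eq v u, hsymm.eq e u, hsymm.eq e v]

theorem linearIndependent (hsymm : B.IsSymm) (h : IsAdaptedTriple B τ v u e) (hτ : τ ≠ 0) :
    LinearIndependent ℝ ![u, v, e] := by
  refine linearIndependent_cons_of_ortho (h.unit_self.trans_ne one_ne_zero)
    (Fin.forall_fin_two.2 ⟨h.unit_line, h.unit_plane⟩) ?_
  obtain hv | he : τ.1 ≠ 0 ∨ τ.2 ≠ 0 := by simpa [Prod.ext_iff, or_iff_not_imp_left] using hτ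
  · exact linearIndependent_pair_of_ortho
      (h.line_self.trans_ne (coe_signType_eq_zero.not.2 hv)) h.line_plane h.plane_ne_zero
  · rw [LinearIndependent.pair_symm_iff]
    exact linearIndependent_pair_of_ortho
      (h.plane_self.trans_ne (coe_signType_eq_zero.not.2 he))
      ((hsymm.eq e v).trans h.line_plane) h.line_ne_zero

theorem span_pair_eq_of_type_eq_zero (hB : IsLorentzian B) (h : IsAdaptedTriple B 0 v u e) :
    Submodule.span ℝ {u, e} = Submodule.span ℝ {u, v} := by
  obtain ⟨-, -, c, hc, rfl⟩ := hB.apply_self_eq_zero_and_eq_smul_of_ortho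
    h.line_ne_zero h.plane_ne_zero (by simp [h.line_self]) (by simp [h.plane_self]) h.line_plane
  simp only [Submodule.span_insert, Submodule.span_singleton_smul_eq (IsUnit.mk0 c hc)]

theorem exists_isometryEquiv_map_span_pair [FiniteDimensional ℝ E] (hB : IsLorentzian B)
    (h : IsAdaptedTriple B τ v u e) (h' : IsAdaptedTriple B τ v' u' e') :
    ∃ g : B.IsometryEquiv B, g v = v' ∧
      (Submodule.span ℝ {u, e}).map g.toLinearEquiv.toLinearMap = Submodule.span ℝ {u', e'} := by
  have hgram (i j) :=
    (h.gram_eq_diagonal hB.isSymm i j).trans (h'.gram_eq_diagonal hB.isSymm i j).symm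
  obtain rfl | hτ := eq_or_ne τ 0
  · obtain ⟨g, hg⟩ := exists_isometryEquiv_of_gram_eq hB.nondegenerate hB.isSymm
      (linearIndependent_pair_of_ortho (h.unit_self.trans_ne one_ne_zero) h.unit_line
        h.line_ne_zero)
      (linearIndependent_pair_of_ortho (h'.unit_self.trans_ne one_ne_zero) h'.unit_line
        h'.line_ne_zero)
      (by simpa [Fin.forall_fin_succ] using fun i j : Fin 2 ↦ hgram i.castSucc j.castSucc)
    obtain ⟨hu, hv⟩ := Fin.forall_fin_two.1 hg
    refine ⟨g, hv, ?_⟩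
    rw [h.span_pair_eq_of_type_eq_zero hB, h'.span_pair_eq_of_type_eq_zero hB,
      Submodule.map_span, Set.image_pair]
    exact congrArg₂ (fun a b ↦ Submodule.span ℝ {a, b}) hu hv
  · obtain ⟨g, hg⟩ := exists_isometryEquiv_of_gram_eq hB.nondegenerate hB.isSymm
      (h.linearIndependent hB.isSymm hτ) (h'.linearIndependent hB.isSymm hτ) hgram
    refine ⟨g, hg 1, ?_⟩
    rw [Submodule.map_span, Set.image_pair]
    exact congrArg₂ (fun a b ↦ Submodule.span ℝ {a, b}) (hg 0) (hg 2)

theorem exists_type_fst_eq_sq_mul (h : IsAdaptedTriple B τ v u e)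
    (h' : IsAdaptedTriple B τ' v' u' e')
    (hline : Submodule.span ℝ {v} ≤ Submodule.span ℝ {v'}) :
    ∃ r : ℝ, (τ.1 : ℝ) = r ^ 2 * τ'.1 := by
  rw [← h.line_self, ← h'.line_self]
  exact apply_self_eq_sq_mul (hline (Submodule.mem_span_singleton_self v))

theorem exists_type_snd_eq_sq_mul (h : IsAdaptedTriple B τ v u e)
    (h' : IsAdaptedTriple B τ' v' u' e')
    (hplane : Submodule.span ℝ {u, e} ≤ Submodule.span ℝ {u', e'}) :
    ∃ r : ℝ, (τ.2 : ℝ) = r ^ 2 * τ'.2 := by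
  have hu : u ∈ Submodule.span ℝ {u', e'} := hplane (Submodule.subset_span (by simp))
  have he : e ∈ Submodule.span ℝ {u', e'} := hplane (Submodule.subset_span (by simp))
  simpa only [h.unit_self, h'.unit_self, h.plane_self, h'.plane_self, h.unit_plane,
    h'.unit_plane, one_mul, zero_mul, sub_zero] using gram_det_eq_sq_mul (B := B) hu he

theorem type_eq (h : IsAdaptedTriple B τ v u e) (h' : IsAdaptedTriple B τ' v' u' e')
    (hline : Submodule.span ℝ {v} = Submodule.span ℝ {v'})
    (hplane : Submodule.span ℝ {u, e} = Submodule.span ℝ {u', e'}) : τ = τ' := by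
  obtain ⟨r, hr⟩ := h.exists_type_fst_eq_sq_mul h' hline.le
  obtain ⟨s, hs⟩ := h'.exists_type_fst_eq_sq_mul h hline.ge
  obtain ⟨r', hr'⟩ := h.exists_type_snd_eq_sq_mul h' hplane.le
  obtain ⟨s', hs'⟩ := h'.exists_type_snd_eq_sq_mul h hplane.ge
  ext1
  · simpa only [sign_coe] using sign_eq_of_eq_sq_mul hr hs
  · simpa only [sign_coe] using sign_eq_of_eq_sq_mul hr' hs'

end IsAdaptedTriple

theorem IsLorentzian.exists_isAdaptedTriple (hB : IsLorentzian B) {τ : SignType × SignType}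
    (hE : 4 ≤ finrank ℝ E) (hτ : τ ∈ lorentzianFlagTypes) :
    ∃ v u e, IsAdaptedTriple B τ v u e := by
  obtain ⟨t, b, htt, hbt, hb⟩ := hB.exists_orthonormal_frame (k := 3) (by lia)
  have hplane (c : SignType) :
      ∃ n ≠ 0, B n n = c ∧ ∀ z, B z t = 0 → B z (b 0) = 0 → B z n = 0 :=
    exists_ne_zero_apply_self_eq_coe htt (by simp [hb]) (hbt 0) ((hB.isSymm.eq _ _).trans (hbt 0)) c
  have hx0 : b 1 ≠ 0 := fun h ↦ by simpa [h] using hb 1 1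
  rw [lorentzianFlagTypes, Finset.mem_filter_univ] at hτ
  obtain ⟨a, c⟩ := τ
  obtain rfl | rfl | hac : a = 1 ∨ c = 1 ∨ (a, c) = 0 := hτ
  · obtain ⟨n, hn0, hnn, hn⟩ := hplane c
    exact ⟨b 1, b 2, n, hx0, hn0, by simp [hb], by simp [hb], hnn, by simp [hb],
      hn _ (hbt 2) (by simp [hb]), hn _ (hbt 1) (by simp [hb])⟩
  · obtain ⟨n, hn0, hnn, hn⟩ := hplane a
    exact ⟨n, b 2, b 1, hn0, hx0, hnn, by simp [hb], by simp [hb],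
      hn _ (hbt 2) (by simp [hb]), by simp [hb],
      (hB.isSymm.eq _ _).trans (hn _ (hbt 1) (by simp [hb]))⟩
  · obtain ⟨n, hn0, hnn, hn⟩ := hplane 0
    rw [SignType.coe_zero] at hnn
    have hun : B (b 2) n = 0 := hn _ (hbt 2) (by simp [hb])
    rw [hac]
    exact ⟨n, b 2, n, hn0, hn0, by simp [hnn], by simp [hb], by simp [hnn], hun, hun, hnn⟩

/-- A flag `X ≤ Y` with `dim X = 1` and `Y` of codimension two has type `τ` if `τ.1` is the sign
of the form on the line `X` and `τ.2` that of its Gram determinant on the plane `Yᗮ`; both are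
read off an adapted triple spanning `X` and `Yᗮ`. -/
def HasFlagType (B : BilinForm ℝ E) (τ : SignType × SignType) (X Y : Submodule ℝ E) : Prop :=
  ∃ v u e, IsAdaptedTriple B τ v u e ∧ X = Submodule.span ℝ {v} ∧
    Y = B.orthogonal (Submodule.span ℝ {u, e})

section FlagType

variable {τ τ' : SignType × SignType} {X Y X' Y' : Submodule ℝ E}

theorem HasFlagType.mem_lorentzianFlagTypes (hB : IsLorentzian B) (h : HasFlagType B τ X Y) :
    τ ∈ lorentzianFlagTypes :=
  let ⟨_, _, _, h, _⟩ := h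
  h.type_mem_lorentzianFlagTypes hB

theorem HasFlagType.map (h : HasFlagType B τ X Y) (g : B.IsometryEquiv B) :
    HasFlagType B τ (X.map g.toLinearEquiv.toLinearMap) (Y.map g.toLinearEquiv.toLinearMap) := by
  obtain ⟨v, u, e, h, rfl, rfl⟩ := h
  refine ⟨g v, g u, g e, h.map g, ?_, ?_⟩
  · rw [Submodule.map_span, Set.image_singleton]
    rfl
  · rw [map_orthogonal, Submodule.map_span, Set.image_pair]
    rfl

variable [FiniteDimensional ℝ E]

theorem IsLorentzian.orthogonal_orthogonal (hB : IsLorentzian B) (W : Submodule ℝ E) :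
    B.orthogonal (B.orthogonal W) = W :=
  BilinForm.orthogonal_orthogonal hB.nondegenerate hB.isSymm.isRefl W

theorem HasFlagType.type_eq (hB : IsLorentzian B) (h : HasFlagType B τ X Y)
    (h' : HasFlagType B τ' X Y) : τ = τ' := by
  obtain ⟨v, u, e, h, hX, hY⟩ := h
  obtain ⟨v', u', e', h', hX', hY'⟩ := h'
  refine h.type_eq h' (hX.symm.trans hX') ?_
  rw [← hB.orthogonal_orthogonal (Submodule.span ℝ {u, e}), ← hY, hY', hB.orthogonal_orthogonal]

theorem HasFlagType.exists_isometryEquiv_iff (hB : IsLorentzian B) (h : HasFlagType B τ X Y)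
    (h' : HasFlagType B τ' X' Y') :
    (∃ g : B.IsometryEquiv B, X = X'.map g.toLinearEquiv.toLinearMap ∧
      Y = Y'.map g.toLinearEquiv.toLinearMap) ↔ τ = τ' := by
  constructor
  · rintro ⟨g, rfl, rfl⟩
    exact h.type_eq hB (h'.map g)
  · rintro rfl
    obtain ⟨v, u, e, h, rfl, rfl⟩ := h
    obtain ⟨v', u', e', h', rfl, rfl⟩ := h'
    obtain ⟨g, rfl, hspan⟩ := h'.exists_isometryEquiv_map_span_pair hB h
    refine ⟨g, ?_, by rw [map_orthogonal, hspan]⟩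
    rw [Submodule.map_span, Set.image_singleton]
    rfl

theorem IsLorentzian.exists_hasFlagType (hB : IsLorentzian B) (hXY : X ≤ Y)
    (hX : finrank ℝ X = 1) (hY : finrank ℝ Y + 2 = finrank ℝ E) :
    ∃ τ, HasFlagType B τ X Y := by
  have hY2 : finrank ℝ (B.orthogonal Y) = 2 := by
    rw [BilinForm.finrank_orthogonal hB.nondegenerate]
    lia
  obtain ⟨v, a, hv, hvv, rfl⟩ := exists_span_singleton_apply_self_eq B hX
  obtain ⟨u, e, c, huu, hue, he, hee, hspan⟩ := hB.exists_ortho_span_pair hY2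
  have hYspan : Y = B.orthogonal (Submodule.span ℝ {u, e}) := by
    rw [← hspan, hB.orthogonal_orthogonal]
  obtain ⟨huv, hev⟩ := mem_orthogonal_span_pair.1
    (hYspan ▸ hXY (Submodule.mem_span_singleton_self v))
  exact ⟨(a, c), v, u, e,
    ⟨hv, he, hvv, huu, hee, huv, hue, (hB.isSymm.eq v e).trans hev⟩, rfl, hYspan⟩

theorem IsLorentzian.exists_flag_hasFlagType (hB : IsLorentzian B) (hE : 4 ≤ finrank ℝ E)
    (hτ : τ ∈ lorentzianFlagTypes) :
    ∃ X Y : Submodule ℝ E, X ≤ Y ∧ finrank ℝ X = 1 ∧ finrank ℝ Y = finrank ℝ E - 2 ∧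
      HasFlagType B τ X Y := by
  obtain ⟨v, u, e, h⟩ := hB.exists_isAdaptedTriple hE hτ
  refine ⟨Submodule.span ℝ {v}, B.orthogonal (Submodule.span ℝ {u, e}), ?_,
    finrank_span_singleton h.line_ne_zero, ?_, v, u, e, h, rfl, rfl⟩
  · rw [Submodule.span_singleton_le_iff_mem, mem_orthogonal_span_pair]
    exact ⟨h.unit_line, (hB.isSymm.eq _ _).trans h.line_plane⟩
  · rw [BilinForm.finrank_orthogonal hB.nondegenerate,
      finrank_span_pair_of_ortho (h.unit_self.trans_ne one_ne_zero) h.unit_plane h.plane_ne_zero]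

end FlagType

end Lorentzian

section StandardForm

theorem stdForm_one_apply (p : ℕ) (x y : Fin (p + 1) → ℝ) :
    stdForm p 1 x y =
      ∑ i : Fin p, x i.castSucc * y i.castSucc - x (Fin.last p) * y (Fin.last p) := by
  simp [stdForm, Matrix.toLinearMap₂'_apply, Matrix.diagonal_apply, Fin.sum_univ_castSucc,
    sub_eq_add_neg]

theorem isLorentzian_stdForm_one (p : ℕ) : IsLorentzian (stdForm p 1) where
  isSymm := ⟨fun x y ↦ by simp only [stdForm_one_apply, mul_comm]⟩
  exists_timelike := by
    refine ⟨Pi.single (Fin.last p) 1, by simp [stdForm_one_apply, Fin.castSucc_ne_last],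
      fun x hx hx0 ↦ ?_⟩
    have hlast : x (Fin.last p) = 0 := by
      simpa [stdForm_one_apply, Fin.castSucc_ne_last] using hx
    obtain ⟨i, hi⟩ : ∃ i : Fin p, x i.castSucc ≠ 0 := by
      by_contra! h
      exact hx0 (funext (Fin.lastCases hlast h))
    rw [stdForm_one_apply, hlast, mul_zero, sub_zero]
    exact Finset.sum_pos' (fun i _ ↦ mul_self_nonneg _)
      ⟨i, Finset.mem_univ i, mul_self_pos.2 hi⟩

theorem orbitRel_iff_exists_isometryEquiv {p q : ℕ} (F G : FlagPQ p q) :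
    orbitRel p q F G ↔ ∃ g : (stdForm p q).IsometryEquiv (stdForm p q),
      F.1.1 = G.1.1.map g.toLinearEquiv.toLinearMap ∧
        F.1.2 = G.1.2.map g.toLinearEquiv.toLinearMap :=
  ⟨fun ⟨g, hg, hF⟩ ↦ ⟨⟨g, hg⟩, hF⟩, fun ⟨g, hF⟩ ↦ ⟨g.toLinearEquiv, g.map_app', hF⟩⟩

end StandardForm

theorem card_quot_eq_of_surjective {α β : Type*} {r : α → α → Prop} {f : α → β}
    (hf : Function.Surjective f) (hr : ∀ a b, r a b ↔ f a = f b) :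
    Nat.card (Quot r) = Nat.card β := by
  obtain rfl : r = Setoid.ker f := by
    ext a b
    exact hr a b
  exact Nat.card_congr (Setoid.quotientKerEquivOfSurjective f hf)

/-- If `p ≥ 3` and `q = 1`, the action of `O(p,q)` on the flag manifold `F_{1, p+q-2}`
has exactly 6 orbits. -/
theorem orbit_count_of_q_eq_one (p : ℕ) (hp : 3 ≤ p) :
    Nat.card (Quot (orbitRel p 1)) = 6 := by
  have hB := isLorentzian_stdForm_one p
  have hdim : finrank ℝ (Fin (p + 1) → ℝ) = p + 1 := finrank_fin_fun ℝ
  have htype (F : FlagPQ p 1) :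
      ∃ τ : lorentzianFlagTypes, HasFlagType (stdForm p 1) τ F.1.1 F.1.2 := by
    obtain ⟨τ, hF⟩ := hB.exists_hasFlagType F.2.1 F.2.2.1 (by have := F.2.2.2; lia)
    exact ⟨⟨τ, hF.mem_lorentzianFlagTypes hB⟩, hF⟩
  choose flagType hflagType using htype
  have horbit (F G : FlagPQ p 1) : orbitRel p 1 F G ↔ flagType F = flagType G := by
    rw [orbitRel_iff_exists_isometryEquiv, Subtype.ext_iff]
    exact (hflagType F).exists_isometryEquiv_iff hB (hflagType G)
  have hsurj : Function.Surjective flagType := by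
    rintro ⟨τ, hτ⟩
    obtain ⟨X, Y, hXY, hX, hY, hF⟩ := hB.exists_flag_hasFlagType (by lia) hτ
    exact ⟨⟨(X, Y), hXY, hX, by lia⟩, Subtype.ext ((hflagType _).type_eq hB hF)⟩
  rw [card_quot_eq_of_surjective hsurj horbit, Nat.card_eq_finsetCard]
  decide
end
end

section
/- Let p = q = 2, so n = 4. The action of O(2,2) on the flag manifold F_{1,2} = {(V₁, V₂) : V₁ ⊆ V₂ ⊆ ℝ⁴, dim V₁ = 1, dim V₂ = 2} has exactly 10 orbits. (By the correspondence established in the paper, this is the number of left-invariant pseudo-Riemannian metrics of signature (2,2) on H₃ × ℝ up to scaling and automorphisms.) -/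
open Module

noncomputable section

/-!
By Witt's extension theorem, two flags lie in the same orbit as soon as they have bases
`(v, w)` of `V₂` with `v ∈ V₁` and the same Gram matrix. Replacing `(v, w)` by `(r v, k v + s w)`
brings that Gram matrix to exactly one of ten normal forms: `diag(ε, δ)` with `ε, δ ∈ {-1, 0, 1}`,
or the hyperbolic plane `!![0, 1; 1, 0]`. Each of them is realised in `ℝ^{2,2}`.
-/

section Witt

variable {K V : Type*} [Field K] [AddCommGroup V] [Module K V] {B : LinearMap.BilinForm K V}

lemma exists_orthogonal_apply_ne_zero {ι : Type*} [Finite ι] (hB : B.Nondegenerate) {v : ι → V}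
    {w : V} (hw : w ∉ Submodule.span K (Set.range v)) :
    ∃ y, (∀ i, B (v i) y = 0) ∧ B w y ≠ 0 := by
  by_contra! hker
  have hmem : B w ∈ Submodule.span K (Set.range fun i ↦ B (v i)) :=
    mem_span_of_iInf_ker_le_ker fun y hy ↦ hker y (by simpa using hy)
  rw [← Function.comp_def B v, Set.range_comp, ← Submodule.map_span] at hmem
  obtain ⟨w', hw', hBw⟩ := hmem
  exact hw (LinearMap.ker_eq_bot.mp hB.ker_eq_bot hBw ▸ hw')

lemma exists_orthogonal_apply_ne_zero_pair {ι : Type*} [Finite ι] (hB : B.Nondegenerate)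
    {v : ι → V} {w w' : V} (hw : w ∉ Submodule.span K (Set.range v))
    (hw' : w' ∉ Submodule.span K (Set.range v)) :
    ∃ y, (∀ i, B (v i) y = 0) ∧ B w y ≠ 0 ∧ B w' y ≠ 0 := by
  obtain ⟨y, hvy, hwy⟩ := exists_orthogonal_apply_ne_zero hB hw
  obtain ⟨y', hvy', hwy'⟩ := exists_orthogonal_apply_ne_zero hB hw'
  by_cases h : B w' y = 0
  · by_cases h' : B w y' = 0
    · exact ⟨y + y', fun i ↦ by simp [hvy, hvy'], by simpa [h'], by simpa [h]⟩
    · exact ⟨y', hvy', h', hwy'⟩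
  · exact ⟨y, hvy, hwy, h⟩

lemma exists_isometryEquiv_apply_of_anisotropic_sub (hB : B.IsSymm) {w w' : V}
    (hww : B w w = B w' w') (hne : B (w' - w) (w' - w) ≠ 0) :
    ∃ g : B.IsometryEquiv B, g w = w' ∧ ∀ x, B (w' - w) x = 0 → g x = x := by
  have hu : B.IsReflective (w' - w) :=
    ⟨.of_ne_zero hne, fun y ↦ ⟨2 * B (w' - w) y / B (w' - w) (w' - w), by field_simp⟩⟩
  have coroot_eq {x : V} {c : K} (h : 2 * B (w' - w) x = B (w' - w) (w' - w) * c) :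
      hu.coroot B x = c :=
    mul_left_cancel₀ hne (by rw [hu.apply_self_mul_coroot_apply, h])
  refine ⟨⟨Module.reflection (hu.coroot_apply_self B),
    hu.isOrthogonal_reflection B ⟨hB.eq⟩⟩, ?_, fun x hx ↦ ?_⟩
  · have hc : hu.coroot B w = -1 := coroot_eq (by
      simp only [map_sub, LinearMap.sub_apply, hB.eq w w']
      linear_combination -hww)
    change Module.reflection (hu.coroot_apply_self B) w = w'
    rw [Module.reflection_apply, hc]
    module
  · have hc : hu.coroot B x = 0 := coroot_eq (by rw [hx]; ring)
    change Module.reflection (hu.coroot_apply_self B) x = x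
    rw [Module.reflection_apply, hc, zero_smul, sub_zero]

/-- For an isotropic vector `u` and scalars with `B u y = b - a`, an isometry that moves every
`w ⊥ u` with `B w y = a` to `w + u` and fixes `{u, y}ᗮ`. It is an Eichler transformation when
`a = b` and otherwise a dilation of the hyperbolic plane spanned by `u` and `y`. -/
def isotropicShift (B : LinearMap.BilinForm K V) (u y : V) (a b : K) : V →ₗ[K] V :=
  LinearMap.id + (a⁻¹ • B y - (B y y / (2 * a * b)) • B u).smulRight u - (b⁻¹ • B u).smulRight y

lemma isotropicShift_apply (u y x : V) (a b : K) :
    isotropicShift B u y a b x =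
      x + (a⁻¹ * B y x - B y y / (2 * a * b) * B u x) • u - (b⁻¹ * B u x) • y := by
  simp [isotropicShift]

lemma apply_isotropicShift_isotropicShift [NeZero (2 : K)] (hB : B.IsSymm) {u y : V} {a b : K}
    (huu : B u u = 0) (huy : B u y = b - a) (ha : a ≠ 0) (hb : b ≠ 0) (x z : V) :
    B (isotropicShift B u y a b x) (isotropicShift B u y a b z) = B x z := by
  simp only [isotropicShift_apply, map_add, map_sub, map_smul, LinearMap.add_apply,
    LinearMap.sub_apply, LinearMap.smul_apply, smul_eq_mul, hB.eq x u, hB.eq x y, hB.eq y u, huu,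
    huy]
  have := two_ne_zero (α := K)
  field_simp
  ring

lemma isotropicShift_neg_isotropicShift [NeZero (2 : K)] (hB : B.IsSymm) {u y : V} {a b : K}
    (huu : B u u = 0) (huy : B u y = b - a) (ha : a ≠ 0) (hb : b ≠ 0) (x : V) :
    isotropicShift B (-u) y b a (isotropicShift B u y a b x) = x := by
  simp only [isotropicShift_apply, map_add, map_sub, map_smul, map_neg, LinearMap.neg_apply,
    hB.eq y u, huu, huy]
  have := two_ne_zero (α := K)
  match_scalars <;> field_simp <;> ring

lemma isotropicShift_bijective [NeZero (2 : K)] (hB : B.IsSymm) {u y : V} {a b : K}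
    (huu : B u u = 0) (huy : B u y = b - a) (ha : a ≠ 0) (hb : b ≠ 0) :
    Function.Bijective (isotropicShift B u y a b) := by
  refine Function.bijective_iff_has_inverse.mpr ⟨isotropicShift B (-u) y b a,
    isotropicShift_neg_isotropicShift hB huu huy ha hb, fun x ↦ ?_⟩
  have hneg := isotropicShift_neg_isotropicShift hB (u := -u) (y := y) (by simpa using huu)
    (by simp [huy]) hb ha x
  rwa [neg_neg] at hneg

lemma exists_isometryEquiv_apply_of_isotropic_sub [NeZero (2 : K)] (hB : B.IsSymm) {w w' y : V}
    (hww : B w w = B w' w') (hiso : B (w' - w) (w' - w) = 0) (hwy : B w y ≠ 0)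
    (hwy' : B w' y ≠ 0) :
    ∃ g : B.IsometryEquiv B, g w = w' ∧ ∀ x, B (w' - w) x = 0 → B y x = 0 → g x = x := by
  have huy : B (w' - w) y = B w' y - B w y := by simp
  have huw : B (w' - w) w = 0 := by
    apply mul_left_cancel₀ (two_ne_zero (α := K))
    simp only [map_sub, LinearMap.sub_apply, hB.eq w w'] at hiso ⊢
    linear_combination -hww - hiso
  let shift := LinearEquiv.ofBijective _ (isotropicShift_bijective hB hiso huy hwy hwy')
  refine ⟨⟨shift, apply_isotropicShift_isotropicShift hB hiso huy hwy hwy'⟩, ?_, fun x hux hyx ↦ ?_⟩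
  · change isotropicShift B (w' - w) y (B w y) (B w' y) w = w'
    rw [isotropicShift_apply, huw, hB.eq y w, inv_mul_cancel₀ hwy]
    module
  · change isotropicShift B (w' - w) y (B w y) (B w' y) x = x
    simp only [isotropicShift_apply, hux, hyx, mul_zero, sub_zero, zero_smul, add_zero]

lemma exists_isometryEquiv_fixing_apply [NeZero (2 : K)] {ι : Type*} [Finite ι] (hB : B.IsSymm)
    (hnd : B.Nondegenerate) {v : ι → V} {w w' : V} (hw : w ∉ Submodule.span K (Set.range v))
    (hw' : w' ∉ Submodule.span K (Set.range v)) (hvw : ∀ i, B (v i) w = B (v i) w')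
    (hww : B w w = B w' w') :
    ∃ g : B.IsometryEquiv B, g w = w' ∧ ∀ i, g (v i) = v i := by
  have huv (i : ι) : B (w' - w) (v i) = 0 := by rw [hB.eq, map_sub, hvw, sub_self]
  by_cases hu : B (w' - w) (w' - w) = 0
  · obtain ⟨y, hvy, hwy, hwy'⟩ := exists_orthogonal_apply_ne_zero_pair hnd hw hw'
    obtain ⟨g, hgw, hg⟩ := exists_isometryEquiv_apply_of_isotropic_sub hB hww hu hwy hwy'
    exact ⟨g, hgw, fun i ↦ hg _ (huv i) (by rw [hB.eq, hvy])⟩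
  · obtain ⟨g, hgw, hg⟩ := exists_isometryEquiv_apply_of_anisotropic_sub hB hww hu
    exact ⟨g, hgw, fun i ↦ hg _ (huv i)⟩

theorem witt_extension [NeZero (2 : K)] (hB : B.IsSymm) (hnd : B.Nondegenerate) {n : ℕ}
    {v v' : Fin n → V} (hv : LinearIndependent K v) (hv' : LinearIndependent K v')
    (hgram : ∀ i j, B (v i) (v j) = B (v' i) (v' j)) :
    ∃ g : B.IsometryEquiv B, ∀ i, g (v i) = v' i := by
  induction n with
  | zero => exact ⟨.refl B, fun i ↦ i.elim0⟩
  | succ n ih =>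
    obtain ⟨hv_tail, -⟩ := linearIndependent_finSucc.mp hv
    obtain ⟨hv'_tail, hv'_zero⟩ := linearIndependent_finSucc.mp hv'
    obtain ⟨g, hg⟩ := ih hv_tail hv'_tail fun i j ↦ hgram i.succ j.succ
    have hgv_tail : Fin.tail (g ∘ v) = Fin.tail v' := funext hg
    have hgv : LinearIndependent K (g ∘ v) :=
      hv.map' g.toLinearEquiv.toLinearMap g.toLinearEquiv.ker
    have hgv_zero : g (v 0) ∉ Submodule.span K (Set.range (Fin.tail v')) :=
      hgv_tail ▸ (linearIndependent_finSucc.mp hgv).2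
    have hgram_zero (i : Fin n) : B (Fin.tail v' i) (g (v 0)) = B (Fin.tail v' i) (v' 0) := by
      rw [← hg, g.map_app, hg]
      exact hgram i.succ 0
    obtain ⟨k, hk_zero, hk_tail⟩ := exists_isometryEquiv_fixing_apply hB hnd hgv_zero hv'_zero
      hgram_zero (by rw [g.map_app, hgram])
    refine ⟨g.trans k, Fin.cases hk_zero fun i ↦ ?_⟩
    exact (congrArg k (hg i)).trans (hk_tail i)

end Witt

section GramType

/-- Complete invariant of a real binary quadratic form `a x² + 2 b x y + c y²` together with the
line `y = 0`: `none` if the line is isotropic but not in the radical, and otherwise the signs of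
the form on the line and on an orthogonal complement of the line. -/
def gramType : ℝ × ℝ × ℝ → Option (SignType × SignType)
  -- When `a = b = 0`, the junk value `b ^ 2 / a = 0` correctly yields the sign of `c`.
  | (a, b, c) =>
    if a = 0 ∧ b ≠ 0 then none else some (SignType.sign a, SignType.sign (c - b ^ 2 / a))

/-- The coefficients `(a, b, c)` of a distinguished form of each type, see `gramType`. -/
def normalGram : Option (SignType × SignType) → ℝ × ℝ × ℝ
  | none => (0, 1, 0)
  | some (ε, δ) => (ε, 0, δ)

lemma exists_sq_mul_eq_sign (x : ℝ) : ∃ r : ℝ, r ≠ 0 ∧ r ^ 2 * x = SignType.sign x := by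
  rcases eq_or_ne x 0 with rfl | hx
  · exact ⟨1, one_ne_zero, by simp⟩
  · have hpos : 0 < |x| := abs_pos.mpr hx
    refine ⟨(√|x|)⁻¹, inv_ne_zero (Real.sqrt_ne_zero'.mpr hpos), ?_⟩
    rw [inv_pow, Real.sq_sqrt hpos.le, inv_mul_eq_iff_eq_mul₀ hpos.ne', abs_mul_sign]

lemma sign_sq_mul {r : ℝ} (hr : r ≠ 0) (x : ℝ) :
    SignType.sign (r ^ 2 * x) = SignType.sign x := by
  rw [sign_mul, sign_pos (by positivity), one_mul]

lemma gramType_normalGram (t : Option (SignType × SignType)) : gramType (normalGram t) = t := by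
  rcases t with _ | ⟨ε, δ⟩
  · simp [gramType, normalGram]
  · have sign_coe (η : SignType) : SignType.sign (η : ℝ) = η := by cases η <;> simp
    simp [gramType, normalGram, sign_coe]

lemma gramType_triangular {r s : ℝ} (hr : r ≠ 0) (hs : s ≠ 0) (k a b c : ℝ) :
    gramType (r ^ 2 * a, r * (k * a + s * b), k ^ 2 * a + 2 * k * s * b + s ^ 2 * c) =
      gramType (a, b, c) := by
  rcases eq_or_ne a 0 with rfl | ha
  · rcases eq_or_ne b 0 with rfl | hb
    · simp [gramType, sign_sq_mul hs]
    · simp [gramType, hr, hs, hb]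
  · have hcompl : k ^ 2 * a + 2 * k * s * b + s ^ 2 * c - (r * (k * a + s * b)) ^ 2 / (r ^ 2 * a) =
        s ^ 2 * (c - b ^ 2 / a) := by
      field_simp
      ring
    rw [gramType, gramType, if_neg (by simp [ha, hr]), if_neg (by simp [ha]), hcompl,
      sign_sq_mul hr, sign_sq_mul hs]

lemma exists_triangular_eq_normalGram (a b c : ℝ) : ∃ r k s : ℝ, r ≠ 0 ∧ s ≠ 0 ∧
    (r ^ 2 * a, r * (k * a + s * b), k ^ 2 * a + 2 * k * s * b + s ^ 2 * c) =
      normalGram (gramType (a, b, c)) := by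
  by_cases h : a = 0 ∧ b ≠ 0
  · obtain ⟨rfl, hb⟩ := h
    refine ⟨1, -c / (2 * b ^ 2), b⁻¹, one_ne_zero, inv_ne_zero hb, ?_⟩
    rw [gramType, if_pos ⟨rfl, hb⟩, normalGram, Prod.mk.injEq, Prod.mk.injEq]
    refine ⟨?_, ?_, ?_⟩ <;> field_simp <;> ring
  · obtain ⟨r, hr, hra⟩ := exists_sq_mul_eq_sign a
    obtain ⟨s, hs, hsc⟩ := exists_sq_mul_eq_sign (c - b ^ 2 / a)
    refine ⟨r, -s * b / a, s, hr, hs, ?_⟩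
    rw [gramType, if_neg h, normalGram, ← hra, ← hsc]
    rcases eq_or_ne a 0 with rfl | ha
    · simp_all
    · rw [Prod.mk.injEq, Prod.mk.injEq]
      refine ⟨rfl, ?_, ?_⟩ <;> field_simp <;> ring

end GramType

section GramTriple

/-- The entries on and above the diagonal of the Gram matrix of the pair `(v, w)`. -/
def gramTriple {R M : Type*} [CommRing R] [AddCommGroup M] [Module R M]
    (B : LinearMap.BilinForm R M) (v w : M) : R × R × R :=
  (B v v, B v w, B w w)

lemma gramTriple_triangular {R M : Type*} [CommRing R] [AddCommGroup M] [Module R M]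
    {B : LinearMap.BilinForm R M} (hB : B.IsSymm) (r k s : R) (v w : M) :
    gramTriple B (r • v) (k • v + s • w) =
      (r ^ 2 * B v v, r * (k * B v v + s * B v w),
        k ^ 2 * B v v + 2 * k * s * B v w + s ^ 2 * B w w) := by
  simp only [gramTriple, map_add, map_smul, LinearMap.add_apply, LinearMap.smul_apply, smul_eq_mul,
    hB.eq w v, Prod.mk.injEq]
  refine ⟨?_, ?_, ?_⟩ <;> ring

lemma linearIndependent_pair_triangular_iff {K V : Type*} [Field K] [AddCommGroup V] [Module K V]
    {r k s : K} {v w : V} :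
    LinearIndependent K ![r • v, k • v + s • w] ↔
      LinearIndependent K ![v, w] ∧ r ≠ 0 ∧ s ≠ 0 := by
  simpa using LinearIndependent.pair_add_smul_add_smul_iff (R := K) (x := v) (y := w) r 0 k s

end GramTriple

lemma isometry_injective {R M M' : Type*} [CommRing R] [AddCommGroup M] [Module R M]
    [AddCommGroup M'] [Module R M'] {B : LinearMap.BilinForm R M} {B' : LinearMap.BilinForm R M'}
    (hB : B.Nondegenerate) (f : B.Isometry B') : Function.Injective f.toLinearMap := by
  refine (injective_iff_map_eq_zero f.toLinearMap).mpr fun x hx ↦ hB.1 x fun y ↦ ?_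
  rw [← f.map_app, ← f.coe_toLinearMap, hx, map_zero, LinearMap.zero_apply]

/-- Flags `V₁ ≤ V₂` of a line in a plane in a vector space. -/
def LinePlaneFlag (K V : Type*) [Field K] [AddCommGroup V] [Module K V] : Type _ :=
  {VW : Submodule K V × Submodule K V //
    VW.1 ≤ VW.2 ∧ finrank K VW.1 = 1 ∧ finrank K VW.2 = 2}

namespace LinePlaneFlag

section Field

variable {K V : Type*} [Field K] [AddCommGroup V] [Module K V] {B : LinearMap.BilinForm K V}
  {F G : LinePlaneFlag K V} {v w v' w' : V}

/-- Two flags lie in the same orbit of the isometry group of `B`. For the standard form on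
`ℝ^{2,2}` this is definitionally `orbitRel 2 2`. -/
def OrbitRel (B : LinearMap.BilinForm K V) (F G : LinePlaneFlag K V) : Prop :=
  ∃ g : V ≃ₗ[K] V, (∀ x y, B (g x) (g y) = B x y) ∧
    F.1.1 = (G.1.1).map g.toLinearMap ∧ F.1.2 = (G.1.2).map g.toLinearMap

/-- The pair `(v, w)` is a basis of the plane of `F` whose first vector spans the line of `F`.
Linear independence follows from the dimensions, see `IsAdapted.linearIndependent`. -/
structure IsAdapted (F : LinePlaneFlag K V) (v w : V) : Prop where
  line_eq : F.1.1 = Submodule.span K {v}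
  plane_eq : F.1.2 = Submodule.span K {v, w}

lemma IsAdapted.linearIndependent (h : F.IsAdapted v w) : LinearIndependent K ![v, w] := by
  rw [linearIndependent_iff_card_eq_finrank_span, Set.finrank, Matrix.range_cons_cons_empty,
    ← h.plane_eq, F.2.2.2, Fintype.card_fin]

lemma isAdapted_of_mem (hv : v ∈ F.1.1) (hw : w ∈ F.1.2)
    (hvw : LinearIndependent K ![v, w]) : F.IsAdapted v w where
  line_eq := eq_span_singleton_of_mem_of_finrank_eq_one F.2.2.1 hv (hvw.ne_zero 0)
  plane_eq := by
    have : FiniteDimensional K F.1.2 := .of_finrank_pos (by simp [F.2.2.2])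
    refine (Submodule.eq_of_le_of_finrank_eq ?_ ?_).symm
    · simpa [Submodule.span_le, Set.insert_subset_iff] using ⟨F.2.1 hv, hw⟩
    · rw [F.2.2.2, ← Matrix.range_cons_cons_empty, finrank_span_eq_card hvw, Fintype.card_fin]

lemma exists_isAdapted (F : LinePlaneFlag K V) : ∃ v w, F.IsAdapted v w := by
  obtain ⟨v, hv, hv_zero⟩ := F.1.1.exists_mem_ne_zero_of_ne_bot
    fun h ↦ zero_ne_one (finrank_bot K V ▸ h ▸ F.2.2.1)
  obtain ⟨w, hw, hwv⟩ : ∃ w ∈ F.1.2, w ∉ F.1.1 := by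
    refine SetLike.exists_of_lt (F.2.1.lt_of_ne fun h ↦ ?_)
    have hfinrank := F.2.2.1
    rw [h, F.2.2.2] at hfinrank
    lia
  refine ⟨v, w, isAdapted_of_mem hv hw ((LinearIndependent.pair_iff' hv_zero).mpr ?_)⟩
  rintro a rfl
  exact hwv (F.1.1.smul_mem a hv)

lemma exists_isAdapted_of_linearIndependent (hvw : LinearIndependent K ![v, w]) :
    ∃ F : LinePlaneFlag K V, F.IsAdapted v w := by
  refine ⟨⟨(Submodule.span K {v}, Submodule.span K {v, w}), Submodule.span_mono (by simp),
    finrank_span_singleton (hvw.ne_zero 0), ?_⟩, rfl, rfl⟩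
  rw [← Matrix.range_cons_cons_empty, finrank_span_eq_card hvw, Fintype.card_fin]

lemma IsAdapted.triangular (h : F.IsAdapted v w) {r s : K} (hr : r ≠ 0) (hs : s ≠ 0) (k : K) :
    F.IsAdapted (r • v) (k • v + s • w) := by
  have hv : v ∈ F.1.1 := h.line_eq ▸ Submodule.mem_span_singleton_self v
  have hw : w ∈ F.1.2 := h.plane_eq ▸ Submodule.subset_span (by simp)
  exact isAdapted_of_mem (F.1.1.smul_mem r hv)
    (add_mem (F.1.2.smul_mem k (F.2.1 hv)) (F.1.2.smul_mem s hw))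
    (linearIndependent_pair_triangular_iff.mpr ⟨h.linearIndependent, hr, hs⟩)

lemma IsAdapted.exists_triangular (h : F.IsAdapted v w) (h' : F.IsAdapted v' w') :
    ∃ r k s : K, r ≠ 0 ∧ s ≠ 0 ∧ v' = r • v ∧ w' = k • v + s • w := by
  have hv' : v' ∈ Submodule.span K {v} :=
    h.line_eq ▸ h'.line_eq ▸ Submodule.mem_span_singleton_self v'
  have hw' : w' ∈ Submodule.span K {v, w} :=
    h.plane_eq ▸ h'.plane_eq ▸ Submodule.subset_span (by simp)
  obtain ⟨r, rfl⟩ := Submodule.mem_span_singleton.mp hv'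
  obtain ⟨k, s, rfl⟩ := Submodule.mem_span_pair.mp hw'
  obtain ⟨-, hr, hs⟩ := linearIndependent_pair_triangular_iff.mp h'.linearIndependent
  exact ⟨r, k, s, hr, hs, rfl, rfl⟩

lemma IsAdapted.map (h : G.IsAdapted v w) (g : V ≃ₗ[K] V)
    (hline : F.1.1 = G.1.1.map g.toLinearMap) (hplane : F.1.2 = G.1.2.map g.toLinearMap) :
    F.IsAdapted (g v) (g w) where
  line_eq := by simp [hline, h.line_eq, Submodule.map_span]
  plane_eq := by simp [hplane, h.plane_eq, Submodule.map_span, Set.image_pair]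

lemma IsAdapted.orbitRel [NeZero (2 : K)] (hB : B.IsSymm) (hnd : B.Nondegenerate)
    (hF : F.IsAdapted v w) (hG : G.IsAdapted v' w')
    (hgram : gramTriple B v w = gramTriple B v' w') : OrbitRel B F G := by
  simp only [gramTriple, Prod.mk.injEq] at hgram
  obtain ⟨hvv, hvw, hww⟩ := hgram
  have hmatrix (i j : Fin 2) :
      B (![v', w'] i) (![v', w'] j) = B (![v, w] i) (![v, w] j) := by
    fin_cases i <;> fin_cases j <;> simp [hvv, hvw, hww, hB.eq w v, hB.eq w' v']
  obtain ⟨g, hg⟩ := witt_extension hB hnd hG.linearIndependent hF.linearIndependent hmatrix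
  have hgv : g v' = v := hg 0
  have hgw : g w' = w := hg 1
  refine ⟨g.toLinearEquiv, g.map_app', ?_, ?_⟩
  · simp [hF.line_eq, hG.line_eq, Submodule.map_span, hgv]
  · simp [hF.plane_eq, hG.plane_eq, Submodule.map_span, Set.image_pair, hgv, hgw]

end Field

section Real

variable {V : Type*} [AddCommGroup V] [Module ℝ V] {B : LinearMap.BilinForm ℝ V}
  {F G : LinePlaneFlag ℝ V} {v w v' w' : V}

lemma IsAdapted.gramType_eq (hB : B.IsSymm) (h : F.IsAdapted v w) (h' : F.IsAdapted v' w') :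
    gramType (gramTriple B v' w') = gramType (gramTriple B v w) := by
  obtain ⟨r, k, s, hr, hs, rfl, rfl⟩ := h.exists_triangular h'
  rw [gramTriple_triangular hB, gramType_triangular hr hs, gramTriple]

/-- The type of the restriction of `B` to the plane of `F`, relative to the line of `F`. It is
computed in an arbitrary adapted basis; for symmetric `B` the choice does not matter, see
`IsAdapted.type_eq`. -/
def type (B : LinearMap.BilinForm ℝ V) (F : LinePlaneFlag ℝ V) : Option (SignType × SignType) :=
  gramType (gramTriple B F.exists_isAdapted.choose F.exists_isAdapted.choose_spec.choose)

lemma IsAdapted.type_eq (hB : B.IsSymm) (h : F.IsAdapted v w) :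
    F.type B = gramType (gramTriple B v w) :=
  h.gramType_eq hB F.exists_isAdapted.choose_spec.choose_spec

lemma exists_isAdapted_gramTriple_eq_normalGram (hB : B.IsSymm) (F : LinePlaneFlag ℝ V) :
    ∃ v w, F.IsAdapted v w ∧ gramTriple B v w = normalGram (F.type B) := by
  obtain ⟨v, w, h⟩ := F.exists_isAdapted
  obtain ⟨r, k, s, hr, hs, hgram⟩ := exists_triangular_eq_normalGram (B v v) (B v w) (B w w)
  refine ⟨_, _, h.triangular hr hs k, ?_⟩
  rw [gramTriple_triangular hB, hgram, h.type_eq hB, gramTriple]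

lemma OrbitRel.type_eq (hB : B.IsSymm) (h : OrbitRel B F G) : F.type B = G.type B := by
  obtain ⟨g, hg, hline, hplane⟩ := h
  obtain ⟨v, w, hG⟩ := G.exists_isAdapted
  rw [(hG.map g hline hplane).type_eq hB, hG.type_eq hB, gramTriple, gramTriple, hg, hg, hg]

lemma orbitRel_iff_type_eq (hB : B.IsSymm) (hnd : B.Nondegenerate) :
    OrbitRel B F G ↔ F.type B = G.type B := by
  refine ⟨OrbitRel.type_eq hB, fun htype ↦ ?_⟩
  obtain ⟨v, w, hF, hFgram⟩ := exists_isAdapted_gramTriple_eq_normalGram hB F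
  obtain ⟨v', w', hG, hGgram⟩ := exists_isAdapted_gramTriple_eq_normalGram hB G
  exact hF.orbitRel hB hnd hG (by rw [hFgram, hGgram, htype])

lemma exists_type_eq_of_isometry {V' : Type*} [AddCommGroup V'] [Module ℝ V']
    {B' : LinearMap.BilinForm ℝ V'} (hB' : B'.IsSymm) (hnd : B.Nondegenerate) (f : B.Isometry B')
    (F : LinePlaneFlag ℝ V) : ∃ F' : LinePlaneFlag ℝ V', F'.type B' = F.type B := by
  have hB : B.IsSymm := ⟨fun x y ↦ by simp only [← f.map_app, hB'.eq (f x)]⟩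
  obtain ⟨v, w, hF⟩ := F.exists_isAdapted
  have hcomp : f.toLinearMap ∘ ![v, w] = ![f v, f w] := (FinVec.map_eq f ![v, w]).symm
  have hfvw : LinearIndependent ℝ ![f v, f w] :=
    hcomp ▸ hF.linearIndependent.map_injOn f.toLinearMap (isometry_injective hnd f).injOn
  obtain ⟨F', hF'⟩ := exists_isAdapted_of_linearIndependent hfvw
  refine ⟨F', ?_⟩
  rw [hF'.type_eq hB', hF.type_eq hB, gramTriple, gramTriple, f.map_app, f.map_app, f.map_app]

lemma exists_type_eq (hB : B.IsSymm) (hvw : LinearIndependent ℝ ![v, w])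
    {t : Option (SignType × SignType)} (hgram : gramTriple B v w = normalGram t) :
    ∃ F : LinePlaneFlag ℝ V, F.type B = t := by
  obtain ⟨F, hF⟩ := exists_isAdapted_of_linearIndependent hvw
  exact ⟨F, by rw [hF.type_eq hB, hgram, gramType_normalGram]⟩

end Real

end LinePlaneFlag

section StdForm

lemma stdForm_apply (p q : ℕ) (x y : Fin (p + q) → ℝ) :
    stdForm p q x y = ∑ i, x (Fin.castAdd q i) * y (Fin.castAdd q i) -
      ∑ j, x (Fin.natAdd p j) * y (Fin.natAdd p j) := by
  simp [stdForm, Matrix.toLinearMap₂'_apply', dotProduct, Matrix.mulVec_diagonal,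
    Fin.sum_univ_add, sub_eq_add_neg]

lemma isSymm_stdForm (p q : ℕ) : (stdForm p q).IsSymm where
  eq x y := by simp only [stdForm_apply, mul_comm (x _)]

lemma nondegenerate_stdForm (p q : ℕ) : (stdForm p q).Nondegenerate := by
  refine LinearMap.nondegenerate_toLinearMap₂'_of_det_ne_zero' ?_
  rw [Matrix.det_diagonal, Finset.prod_ne_zero_iff]
  intro i _
  split_ifs <;> norm_num

lemma stdForm_two_two_apply (a b c d a' b' c' d' : ℝ) :
    stdForm 2 2 ![a, b, c, d] ![a', b', c', d'] = a * a' + b * b' - c * c' - d * d' := by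
  rw [stdForm_apply, Fin.sum_univ_two, Fin.sum_univ_two, sub_add_eq_sub_sub]
  rfl

lemma exists_type_stdForm_eq_none :
    ∃ F : LinePlaneFlag ℝ (Fin (2 + 2) → ℝ), F.type (stdForm 2 2) = none := by
  refine LinePlaneFlag.exists_type_eq (isSymm_stdForm 2 2) (v := ![1 / 2, 0, 1 / 2, 0])
    (w := ![1, 0, -1, 0]) (LinearIndependent.pair_iff.mpr fun a b hab ↦ ?_) ?_
  · have h0 : a * (1 / 2) + b * 1 = 0 := congrFun hab 0
    have h2 : a * (1 / 2) + b * -1 = 0 := congrFun hab 2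
    constructor <;> linarith
  · norm_num [gramTriple, stdForm_two_two_apply, normalGram]

lemma exists_type_stdForm_eq_some (ε δ : SignType) :
    ∃ F : LinePlaneFlag ℝ (Fin (2 + 2) → ℝ), F.type (stdForm 2 2) = some (ε, δ) := by
  -- `((1 + ε) / 2) ^ 2 - ((1 - ε) / 2) ^ 2 = ε`
  refine LinePlaneFlag.exists_type_eq (isSymm_stdForm 2 2)
    (v := ![(1 + (ε : ℝ)) / 2, 0, (1 - (ε : ℝ)) / 2, 0])
    (w := ![0, (1 + (δ : ℝ)) / 2, 0, (1 - (δ : ℝ)) / 2])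
    (LinearIndependent.pair_iff.mpr fun a b hab ↦ ?_) ?_
  · have h0 : a * ((1 + ε) / 2) + b * 0 = 0 := congrFun hab 0
    have h1 : a * 0 + b * ((1 + δ) / 2) = 0 := congrFun hab 1
    have h2 : a * ((1 - ε) / 2) + b * 0 = 0 := congrFun hab 2
    have h3 : a * 0 + b * ((1 - δ) / 2) = 0 := congrFun hab 3
    constructor <;> linarith
  · simp only [gramTriple, stdForm_two_two_apply, normalGram, Prod.mk.injEq]
    refine ⟨?_, ?_, ?_⟩ <;> ring

lemma type_stdForm_surjective :
    Function.Surjective (LinePlaneFlag.type (stdForm 2 2))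
  | none => exists_type_stdForm_eq_none
  | some (ε, δ) => exists_type_stdForm_eq_some ε δ

end StdForm

theorem orbit_count_of_p_eq_q_eq_two_general {V : Type*} [AddCommGroup V] [Module ℝ V]
    {B : LinearMap.BilinForm ℝ V} (hB : B.IsSymm) (hnd : B.Nondegenerate)
    (f : (stdForm 2 2).Isometry B) : Nat.card (Quot (LinePlaneFlag.OrbitRel B)) = 10 := by
  have hsurj : Function.Surjective (LinePlaneFlag.type B) := fun t ↦ by
    obtain ⟨F, rfl⟩ := type_stdForm_surjective t
    exact F.exists_type_eq_of_isometry hB (nondegenerate_stdForm 2 2) f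
  calc Nat.card (Quot (LinePlaneFlag.OrbitRel B))
      = Nat.card (Quotient (Setoid.ker (LinePlaneFlag.type B))) :=
        Nat.card_congr (Quot.congrRight fun _ _ ↦ LinePlaneFlag.orbitRel_iff_type_eq hB hnd)
    _ = Nat.card (Option (SignType × SignType)) :=
        Nat.card_congr (Setoid.quotientKerEquivOfSurjective _ hsurj)
    _ = 10 := by rw [Nat.card_eq_fintype_card]; rfl

/-- The action of `O(2,2)` on the flag manifold `F_{1,2}` of `ℝ⁴` has exactly 10 orbits. -/
theorem orbit_count_of_p_eq_q_eq_two :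
    Nat.card (Quot (orbitRel 2 2)) = 10 :=
  orbit_count_of_p_eq_q_eq_two_general (isSymm_stdForm 2 2) (nondegenerate_stdForm 2 2) (.id _)
end
end
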